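/- Let W be a kernel and g ∈ L∞([0,1]); let u be the solution of the continuum voting model IVP for (W, g), and for each n ∈ ℕ let u_n be the solution for the block averages (W_n, g_n). Suppose u reaches consensus on [0,1]. Then for every ε > 0, c > 0 and D > 0 there exist T > 0 and N ∈ ℕ such that for every n > N and every t ∈ [T, T + D] there is a measurable set S ⊆ [0,1]² with Lebesgue measure λ(S) < c² such that |u_n(x,t) − u_n(y,t)| ≤ ε for all (x,y) ∈ [0,1]² ∖ S. -/

import Mathlib

open MeasureTheory Filter Set

noncomputable section

/-- Lebesgue measure restricted to `[0,1]`. -/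
def mu01 : Measure ℝ := volume.restrict (Set.Icc (0:ℝ) 1)

/-- A kernel: a symmetric measurable function `[0,1]² → [-1,1]`. -/
def IsKernel (W : ℝ → ℝ → ℝ) : Prop :=
  Measurable (Function.uncurry W) ∧ (∀ x y, W x y = W y x) ∧
    ∀ x y, W x y ∈ Set.Icc (-1:ℝ) 1

/-- A graphon: a symmetric measurable function `[0,1]² → [0,1]`. -/
def IsGraphon (W : ℝ → ℝ → ℝ) : Prop :=
  Measurable (Function.uncurry W) ∧ (∀ x y, W x y = W y x) ∧
    ∀ x y, W x y ∈ Set.Icc (0:ℝ) 1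

/-- `g ∈ L∞([0,1])`: measurable and essentially bounded on `[0,1]`. -/
def IsLinf (g : ℝ → ℝ) : Prop :=
  Measurable g ∧ ∃ M : ℝ, ∀ᵐ x ∂mu01, |g x| ≤ M

/-- A solution of the continuum voting model IVP for `(W, g)`: a jointly measurable
function, essentially bounded on `[0,1] × [0,T]` for every `T > 0`, satisfying the
integral form of the IVP for every `t ≥ 0` and almost every `x ∈ [0,1]`. -/
def IsSolution (W : ℝ → ℝ → ℝ) (g : ℝ → ℝ) (u : ℝ → ℝ → ℝ) : Prop :=
  Measurable (Function.uncurry u) ∧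
  (∀ T > (0:ℝ), ∃ M : ℝ, ∀ t ∈ Set.Icc (0:ℝ) T, ∀ᵐ x ∂mu01, |u x t| ≤ M) ∧
  (∀ t ≥ (0:ℝ), ∀ᵐ x ∂mu01,
    u x t = g x + ∫ s in Set.Icc (0:ℝ) t, ∫ y in Set.Icc (0:ℝ) 1, W x y * (u y s - u x s))

/-- A bounded solution: essentially uniformly bounded over all times `t ≥ 0`. -/
def BoundedSolution (u : ℝ → ℝ → ℝ) : Prop :=
  ∃ M : ℝ, ∀ t ≥ (0:ℝ), ∀ᵐ x ∂mu01, |u x t| ≤ M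

/-- `u` reaches consensus on `A`:
`lim_{t→∞} ess sup_{(x,y) ∈ A×A} |u(x,t) − u(y,t)| = 0`. -/
def ReachesConsensusOn (u : ℝ → ℝ → ℝ) (A : Set ℝ) : Prop :=
  ∀ ε > (0:ℝ), ∃ T : ℝ, ∀ t ≥ T,
    ∀ᵐ p : ℝ × ℝ ∂((volume.restrict A).prod (volume.restrict A)),
      |u p.1 t - u p.2 t| ≤ ε

open Classical in
/-- `u*(x) = lim_{t→∞} u(x,t)` where the limit exists, and `0` otherwise. -/
def uStar (u : ℝ → ℝ → ℝ) (x : ℝ) : ℝ :=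
  if h : ∃ L : ℝ, Filter.Tendsto (fun t => u x t) Filter.atTop (nhds L)
  then h.choose else 0

/-- The normalised degree function of a kernel. -/
def degW (W : ℝ → ℝ → ℝ) (x : ℝ) : ℝ := ∫ y in Set.Icc (0:ℝ) 1, W x y

/-- The block `I_iⁿ = ((i−1)/n, i/n]` containing `x`, i.e. with `i = ⌈n x⌉`. -/
def blockIoc (n : ℕ) (x : ℝ) : Set ℝ :=
  Set.Ioc (((⌈(n : ℝ) * x⌉ : ℤ) : ℝ) / n - 1 / n) (((⌈(n : ℝ) * x⌉ : ℤ) : ℝ) / n)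

/-- The block average of `g`: `g_n(x) = n ∫_{I_iⁿ} g` for `x ∈ I_iⁿ`. -/
def blockAvgG (n : ℕ) (g : ℝ → ℝ) (x : ℝ) : ℝ :=
  (n : ℝ) * ∫ y in blockIoc n x, g y

/-- The block average of `W`: `W_n(x,y) = n² ∫_{I_iⁿ × I_jⁿ} W` for `(x,y) ∈ I_iⁿ × I_jⁿ`. -/
def blockAvgW (n : ℕ) (W : ℝ → ℝ → ℝ) (x y : ℝ) : ℝ :=
  (n : ℝ) ^ 2 * ∫ p in (blockIoc n x) ×ˢ (blockIoc n y), W p.1 p.2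

/-- The `L²([0,1])` norm. -/
def L2normI (f : ℝ → ℝ) : ℝ := Real.sqrt (∫ x in Set.Icc (0:ℝ) 1, (f x) ^ 2)

/-- The `L²([0,1]²)` norm. -/
def L2normSq (F : ℝ → ℝ → ℝ) : ℝ :=
  Real.sqrt (∫ p in (Set.Icc (0:ℝ) 1) ×ˢ (Set.Icc (0:ℝ) 1), (F p.1 p.2) ^ 2)

/-- `A` is a twin-set of `W`. -/
def IsTwinSet (W : ℝ → ℝ → ℝ) (A : Set ℝ) : Prop :=
  MeasurableSet A ∧ A ⊆ Set.Icc (0:ℝ) 1 ∧ 0 < volume A ∧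
  ∃ a : ℝ → ℝ → ℝ, ∀ x ∈ A, ∀ x' ∈ A,
    ∀ᵐ y ∂mu01, W x y = a x x' * W x' y

/-- `A` is a maximal twin-set of `W`. -/
def IsMaximalTwinSet (W : ℝ → ℝ → ℝ) (A : Set ℝ) : Prop :=
  IsTwinSet W A ∧ ∀ B : Set ℝ, IsTwinSet W B → A ⊆ B → volume (symmDiff B A) = 0

/-- A kernel is connected if every measurable `S ⊆ [0,1]` with `0 < λ(S) < 1` satisfies
`∫_{S × ([0,1]∖S)} |W| > 0`. -/
def ConnectedKernel (W : ℝ → ℝ → ℝ) : Prop :=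
  ∀ S : Set ℝ, MeasurableSet S → S ⊆ Set.Icc (0:ℝ) 1 →
    0 < volume S → volume S < 1 →
    0 < ∫ p in S ×ˢ (Set.Icc (0:ℝ) 1 \ S), |W p.1 p.2|

/-- A twin-graphon: a graphon with finitely many maximal twin-sets covering `[0,1]`
up to a null set. -/
def IsTwinGraphon (W : ℝ → ℝ → ℝ) : Prop :=
  IsGraphon W ∧ ∃ (n : ℕ) (A : Fin n → Set ℝ),
    (∀ i, IsMaximalTwinSet W (A i)) ∧
    volume (symmDiff (Set.Icc (0:ℝ) 1) (⋃ i, A i)) = 0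



instance mu01_prob : IsProbabilityMeasure mu01 := ⟨by simp [mu01]⟩

lemma trunc {W : ℝ → ℝ → ℝ} {g : ℝ → ℝ} {u : ℝ → ℝ → ℝ} (h : IsSolution W g u) {T : ℝ}
    (hT : 0 < T) : ∃ M : ℝ, 0 ≤ M ∧ ∃ u' : ℝ → ℝ → ℝ, Measurable (Function.uncurry u') ∧
      (∀ x t, |u' x t| ≤ M) ∧ (∀ t ∈ Icc (0:ℝ) T, ∀ᵐ x ∂mu01, u' x t = u x t) ∧
      ∀ t ∈ Icc (0:ℝ) T, ∀ᵐ x ∂mu01,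
        u' x t = g x + ∫ s in Icc (0:ℝ) t, ∫ y, W x y * (u' y s - u' x s) ∂mu01 := by
  obtain ⟨hm, hb, he⟩ := h
  obtain ⟨M0, hM0⟩ := hb T hT
  set M := max M0 0 with hM
  have hMn : 0 ≤ M := le_max_right _ _
  set u' : ℝ → ℝ → ℝ := fun x t => max (-M) (min M (u x t)) with hu'
  have hm' : Measurable (Function.uncurry u') :=
    measurable_const.max (measurable_const.min hm)
  have heq : ∀ t ∈ Icc (0:ℝ) T, ∀ᵐ x ∂mu01, u' x t = u x t := by
    intro t ht
    filter_upwards [hM0 t ht] with x hx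
    have hx' := abs_le.1 (hx.trans (le_max_left M0 0))
    simp only [hu']
    rw [min_eq_right hx'.2, max_eq_right hx'.1]
  refine ⟨M, hMn, u', hm', ?_, heq, ?_⟩
  · intro x t
    rw [abs_le]
    exact ⟨le_max_left _ _, max_le (by linarith) (min_le_left _ _)⟩
  · have h1 : ∀ᵐ x ∂mu01, ∀ᵐ s ∂(volume.restrict (Icc (0:ℝ) T)), u' x s = u x s := by
      rw [Measure.ae_ae_comm]
      · filter_upwards [ae_restrict_mem measurableSet_Icc] with s hs using heq s hs
      · exact measurableSet_eq_fun hm' hm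
    intro t ht
    filter_upwards [h1, heq t ht, he t ht.1] with x hx1 hx2 hx3
    rw [hx2, hx3]
    congr 1
    have hx1' := ae_mono (Measure.restrict_mono (Icc_subset_Icc le_rfl ht.2) le_rfl) hx1
    apply integral_congr_ae
    filter_upwards [hx1', ae_restrict_mem measurableSet_Icc] with s hs hs2
    apply integral_congr_ae
    filter_upwards [heq s ⟨hs2.1, hs2.2.trans ht.2⟩] with y hy
    rw [hy, hs]

lemma gron {φ : ℝ → ℝ} {A C T : ℝ} (hm : Measurable φ) (h0 : ∀ t, 0 ≤ φ t) (hC : ∀ t, φ t ≤ C)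
    (h : ∀ t ∈ Icc (0:ℝ) T, φ t ≤ A + 2 * ∫ s in Icc (0:ℝ) t, φ s) :
    ∀ t ∈ Icc (0:ℝ) T, φ t ≤ A * Real.exp (2 * t) := by
  have hloc : LocallyIntegrable φ volume :=
    (locallyIntegrable_const C).mono hm.aestronglyMeasurable
      (Eventually.of_forall fun t => by
        rw [Real.norm_of_nonneg (h0 t)]; exact (hC t).trans (le_abs_self C))
  have hii : ∀ a b, IntervalIntegrable φ volume a b := fun a b =>
    (hloc.integrableOn_isCompact isCompact_uIcc).intervalIntegrable
  set Φ : ℝ → ℝ := fun t => A + 2 * ∫ s in (0:ℝ)..t, φ s with hΦ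
  have hΦc : Continuous Φ :=
    continuous_const.add (continuous_const.mul (intervalIntegral.continuous_primitive hii 0))
  have hle : ∀ t ∈ Icc (0:ℝ) T, φ t ≤ Φ t := by
    intro t ht
    have := h t ht
    rwa [integral_Icc_eq_integral_Ioc, ← intervalIntegral.integral_of_le ht.1] at this
  set H : ℝ → ℝ := fun t => ∫ s in (0:ℝ)..t, Φ s with hH
  have hd : ∀ t, HasDerivAt H (Φ t) t := fun t => hΦc.integral_hasStrictDerivAt 0 t |>.hasDerivAt
  have hΦH : ∀ t ∈ Icc (0:ℝ) T, Φ t ≤ 2 * H t + A := by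
    intro t ht
    have : ∫ s in (0:ℝ)..t, φ s ≤ H t := by
      apply intervalIntegral.integral_mono_on ht.1 (hii _ _) (hΦc.intervalIntegrable _ _)
      intro s hs
      exact hle s ⟨hs.1, hs.2.trans ht.2⟩
    simp only [hΦ]; linarith
  have hg : ∀ t ∈ Icc (0:ℝ) T, H t ≤ gronwallBound 0 2 A (t - 0) := by
    apply le_gronwallBound_of_liminf_deriv_right_le (f' := Φ)
    · exact (continuous_iff_continuousAt.2 fun t => (hd t).continuousAt).continuousOn
    · intro x hx r hr
      exact (hd x).hasDerivWithinAt.liminf_right_slope_le hr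
    · simp [hH]
    · intro x hx; exact hΦH x ⟨hx.1, hx.2.le⟩
  intro t ht
  have h1 := hg t ht
  rw [gronwallBound_of_K_ne_0 two_ne_zero, sub_zero] at h1
  have h2 := (hle t ht).trans (hΦH t ht)
  linarith

lemma bint {α : Type*} [MeasurableSpace α] {μ : Measure α} [IsFiniteMeasure μ] {f : α → ℝ}
    (hf : Measurable f) {C : ℝ} (h : ∀ x, |f x| ≤ C) : Integrable f μ :=
  Integrable.of_bound hf.aestronglyMeasurable C (Eventually.of_forall h)

lemma bint_le {α : Type*} [MeasurableSpace α] {μ : Measure α} [IsProbabilityMeasure μ] {f : α → ℝ}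
    {C : ℝ} (h : ∀ x, |f x| ≤ C) : |∫ x, f x ∂μ| ≤ C := by
  have := norm_integral_le_of_norm_le_const (μ := μ) (f := f) (C := C) (Eventually.of_forall h)
  simpa using this

lemma meas_int {f : ℝ × ℝ → ℝ} (hf : Measurable f) (μ : Measure ℝ) [SFinite μ] :
    Measurable (fun x => ∫ y, f (x, y) ∂μ) :=
  (hf.stronglyMeasurable.integral_prod_right' (ν := μ)).measurable

lemma stab {W₁ W₂ : ℝ → ℝ → ℝ} {g₁ g₂ : ℝ → ℝ} {u₁ u₂ : ℝ → ℝ → ℝ} {M₁ M₂ T : ℝ}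
    (hW₁ : Measurable (Function.uncurry W₁)) (hW₂ : Measurable (Function.uncurry W₂))
    (hb₁ : ∀ x y, |W₁ x y| ≤ 1) (hb₂ : ∀ x y, |W₂ x y| ≤ 1)
    (hg : Integrable (fun x => |g₁ x - g₂ x|) mu01)
    (hu₁ : Measurable (Function.uncurry u₁)) (hu₂ : Measurable (Function.uncurry u₂))
    (hM₁ : ∀ x t, |u₁ x t| ≤ M₁) (hM₂ : ∀ x t, |u₂ x t| ≤ M₂)
    (he₁ : ∀ t ∈ Icc (0:ℝ) T, ∀ᵐ x ∂mu01,
        u₁ x t = g₁ x + ∫ s in Icc (0:ℝ) t, ∫ y, W₁ x y * (u₁ y s - u₁ x s) ∂mu01)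
    (he₂ : ∀ t ∈ Icc (0:ℝ) T, ∀ᵐ x ∂mu01,
        u₂ x t = g₂ x + ∫ s in Icc (0:ℝ) t, ∫ y, W₂ x y * (u₂ y s - u₂ x s) ∂mu01) :
    ∀ t ∈ Icc (0:ℝ) T, ∫ x, |u₁ x t - u₂ x t| ∂mu01 ≤
      ((∫ x, |g₁ x - g₂ x| ∂mu01) +
        T * (2 * M₂ * ∫ x, ∫ y, |W₁ x y - W₂ x y| ∂mu01 ∂mu01)) * Real.exp (2 * t) := by
  have hM₁0 : 0 ≤ M₁ := (abs_nonneg _).trans (hM₁ 0 0)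
  have hM₂0 : 0 ≤ M₂ := (abs_nonneg _).trans (hM₂ 0 0)
  set v : ℝ → ℝ → ℝ := fun x t => |u₁ x t - u₂ x t| with hv
  have hvm : Measurable (Function.uncurry v) := (hu₁.sub hu₂).abs
  have hv0 : ∀ x t, 0 ≤ v x t := fun x t => abs_nonneg _
  have hvb : ∀ x t, v x t ≤ M₁ + M₂ := fun x t =>
    (abs_sub _ _).trans (add_le_add (hM₁ x t) (hM₂ x t))
  have hvb' : ∀ x t, |v x t| ≤ M₁ + M₂ := fun x t => by rw [abs_of_nonneg (hv0 x t)]; exact hvb x t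
  have hvx : ∀ t, Measurable (fun x => v x t) := fun t => hvm.comp (by fun_prop : Measurable fun x : ℝ => (x, t))
  have hvt : ∀ x, Measurable (fun t => v x t) := fun x => hvm.comp (by fun_prop : Measurable fun t : ℝ => (x, t))
  set φ : ℝ → ℝ := fun t => ∫ x, v x t ∂mu01 with hφ
  have hφm : Measurable φ := meas_int (hvm.comp measurable_swap) mu01
  have hφ0 : ∀ t, 0 ≤ φ t := fun t => integral_nonneg fun x => hv0 x t
  have hφb' : ∀ t, |φ t| ≤ M₁ + M₂ := fun t => bint_le fun x => hvb' x t
  have hφb : ∀ t, φ t ≤ M₁ + M₂ := fun t => (le_abs_self _).trans (hφb' t)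
  set d : ℝ → ℝ → ℝ := fun x y => |W₁ x y - W₂ x y| with hd
  have hdm : Measurable (Function.uncurry d) := (hW₁.sub hW₂).abs
  have hd2 : ∀ x y, |d x y| ≤ 2 := fun x y => by
    simp only [hd, abs_abs]
    have := (abs_sub _ _).trans (add_le_add (hb₁ x y) (hb₂ x y)); linarith
  have hdx : ∀ x, Measurable (fun y => d x y) := fun x => hdm.comp (by fun_prop : Measurable fun t : ℝ => (x, t))
  set w : ℝ → ℝ := fun x => ∫ y, d x y ∂mu01 with hw
  have hwm : Measurable w := meas_int hdm mu01
  have hw0 : ∀ x, 0 ≤ w x := fun x => integral_nonneg fun y => abs_nonneg _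
  have hwb : ∀ x, |w x| ≤ 2 := fun x => bint_le fun y => hd2 x y
  -- integrand bounds
  have hux₁ : ∀ s, Measurable (fun x => u₁ x s) := fun t => hu₁.comp (by fun_prop : Measurable fun x : ℝ => (x, t))
  have hux₂ : ∀ s, Measurable (fun x => u₂ x s) := fun t => hu₂.comp (by fun_prop : Measurable fun x : ℝ => (x, t))
  have hWx₁ : ∀ x, Measurable (fun y => W₁ x y) := fun t => hW₁.comp (by fun_prop : Measurable fun x : ℝ => (t, x))
  have hWx₂ : ∀ x, Measurable (fun y => W₂ x y) := fun t => hW₂.comp (by fun_prop : Measurable fun x : ℝ => (t, x))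
  have bd : ∀ (W u : ℝ → ℝ → ℝ) (M : ℝ), (∀ x y, |W x y| ≤ 1) → (∀ x t, |u x t| ≤ M) →
      ∀ x y s, |W x y * (u y s - u x s)| ≤ 2 * M := by
    intro W u M h1 h2 x y s
    rw [abs_mul]
    have := (abs_sub _ _).trans (add_le_add (h2 y s) (h2 x s))
    calc |W x y| * |u y s - u x s| ≤ 1 * (M + M) :=
          mul_le_mul (h1 x y) this (abs_nonneg _) zero_le_one
      _ = 2 * M := by ring
  have bd₁ := bd W₁ u₁ M₁ hb₁ hM₁
  have bd₂ := bd W₂ u₂ M₂ hb₂ hM₂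
  have mW : ∀ (W u : ℝ → ℝ → ℝ), Measurable (Function.uncurry W) → Measurable (Function.uncurry u) →
      ∀ x, Measurable (fun s => ∫ y, W x y * (u y s - u x s) ∂mu01) := by
    intro W u h1 h2 x
    refine meas_int (f := fun p => W x p.2 * (u p.2 p.1 - u x p.1)) ?_ mu01
    exact (h1.comp (by fun_prop : Measurable fun p : ℝ × ℝ => (x, p.2))).mul
      ((h2.comp (by fun_prop : Measurable fun p : ℝ × ℝ => (p.2, p.1))).sub
        (h2.comp (by fun_prop : Measurable fun p : ℝ × ℝ => (x, p.1))))
  have key : ∀ x s, |(∫ y, W₁ x y * (u₁ y s - u₁ x s) ∂mu01) -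
      ∫ y, W₂ x y * (u₂ y s - u₂ x s) ∂mu01| ≤ φ s + v x s + 2 * M₂ * w x := by
    intro x s
    have i1 : Integrable (fun y => W₁ x y * (u₁ y s - u₁ x s)) mu01 :=
      bint ((hWx₁ x).mul ((hux₁ s).sub_const _)) (fun y => bd₁ x y s)
    have i2 : Integrable (fun y => W₂ x y * (u₂ y s - u₂ x s)) mu01 :=
      bint ((hWx₂ x).mul ((hux₂ s).sub_const _)) (fun y => bd₂ x y s)
    have iv : Integrable (fun y => v y s) mu01 := bint (hvx s) fun y => hvb' y s
    have id : Integrable (fun y => 2 * M₂ * d x y) mu01 := (bint (hdx x) fun y => hd2 x y).const_mul _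
    rw [← integral_sub i1 i2]
    refine (abs_integral_le_integral_abs).trans ?_
    have e : φ s + v x s + 2 * M₂ * w x = ∫ y, (v y s + v x s + 2 * M₂ * d x y) ∂mu01 := by
      have iv2 : Integrable (fun y => v y s + v x s) mu01 := iv.add (integrable_const _)
      rw [integral_add iv2 id, integral_add iv (integrable_const _),
        integral_const_mul]
      simp [hφ, hw]
    rw [e]
    refine integral_mono (i1.sub i2).abs ((iv.add (integrable_const _)).add id) fun y => ?_
    have e2 : W₁ x y * (u₁ y s - u₁ x s) - W₂ x y * (u₂ y s - u₂ x s) =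
      W₁ x y * ((u₁ y s - u₂ y s) - (u₁ x s - u₂ x s)) + (W₁ x y - W₂ x y) * (u₂ y s - u₂ x s) := by
      ring
    change |W₁ x y * (u₁ y s - u₁ x s) - W₂ x y * (u₂ y s - u₂ x s)| ≤ _
    rw [e2]
    refine (abs_add_le _ _).trans (add_le_add ?_ ?_)
    · rw [abs_mul]
      calc _ ≤ 1 * (v y s + v x s) :=
            mul_le_mul (hb₁ x y) (abs_sub _ _) (abs_nonneg _) zero_le_one
        _ = _ := one_mul _
    · rw [abs_mul]
      have := (abs_sub _ _).trans (add_le_add (hM₂ y s) (hM₂ x s))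
      calc _ ≤ d x y * (M₂ + M₂) := mul_le_mul_of_nonneg_left this (abs_nonneg _)
        _ = _ := by ring
  refine gron (C := M₁ + M₂) hφm hφ0 hφb ?_
  intro t ht
  have hTt : t ≤ T := ht.2
  set G : ℝ → ℝ → ℝ := fun x s => φ s + v x s + 2 * M₂ * w x with hG
  have hGm : Measurable (Function.uncurry G) :=
    ((hφm.comp measurable_snd).add hvm).add ((hwm.comp measurable_fst).const_mul _)
  have hGb : ∀ x s, |G x s| ≤ (M₁ + M₂) + (M₁ + M₂) + 2 * M₂ * 2 := by
    intro x s
    refine (abs_add_le _ _).trans (add_le_add ((abs_add_le _ _).trans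
      (add_le_add (hφb' s) (hvb' x s))) ?_)
    rw [abs_mul, abs_of_nonneg (by positivity : 0 ≤ 2 * M₂)]
    exact mul_le_mul_of_nonneg_left (hwb x) (by positivity)
  set ν := volume.restrict (Icc (0:ℝ) t) with hν
  have hGi : Integrable (Function.uncurry G) (mu01.prod ν) := bint hGm fun p => hGb p.1 p.2
  have hpt : ∀ᵐ x ∂mu01, v x t ≤ |g₁ x - g₂ x| + ∫ s, G x s ∂ν := by
    filter_upwards [he₁ t ht, he₂ t ht] with x h1 h2
    have j1 : Integrable (fun s => ∫ y, W₁ x y * (u₁ y s - u₁ x s) ∂mu01) ν :=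
      bint (mW W₁ u₁ hW₁ hu₁ x) fun s => bint_le fun y => bd₁ x y s
    have j2 : Integrable (fun s => ∫ y, W₂ x y * (u₂ y s - u₂ x s) ∂mu01) ν :=
      bint (mW W₂ u₂ hW₂ hu₂ x) fun s => bint_le fun y => bd₂ x y s
    have : u₁ x t - u₂ x t = (g₁ x - g₂ x) + ∫ s, ((∫ y, W₁ x y * (u₁ y s - u₁ x s) ∂mu01) -
      ∫ y, W₂ x y * (u₂ y s - u₂ x s) ∂mu01) ∂ν := by
      rw [integral_sub j1 j2, h1, h2]; ring
    simp only [hv]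
    rw [this]
    refine (abs_add_le _ _).trans (add_le_add le_rfl ?_)
    refine (abs_integral_le_integral_abs).trans ?_
    refine integral_mono (j1.sub j2).abs ?_ fun s => key x s
    exact bint (hGm.comp (by fun_prop : Measurable fun s : ℝ => (x, s))) fun s => hGb x s
  have h3 : φ t ≤ ∫ x, (|g₁ x - g₂ x| + ∫ s, G x s ∂ν) ∂mu01 :=
    integral_mono_ae (bint (hvx t) fun x => hvb' x t) (hg.add hGi.integral_prod_left) hpt
  have hGi' : Integrable (fun x => ∫ s, G x s ∂ν) mu01 := hGi.integral_prod_left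
  rw [integral_add hg hGi', integral_integral_swap hGi] at h3
  have h4 : ∀ s, ∫ x, G x s ∂mu01 = 2 * φ s + 2 * M₂ * ∫ x, w x ∂mu01 := by
    intro s
    have iv : Integrable (fun y => v y s) mu01 := bint (hvx s) fun y => hvb' y s
    have iw : Integrable (fun y => 2 * M₂ * w y) mu01 := (bint hwm hwb).const_mul _
    simp only [hG]
    have iv2 : Integrable (fun y => φ s + v y s) mu01 := (integrable_const _).add iv
    rw [integral_add iv2 iw, integral_add (integrable_const _) iv,
      integral_const_mul]
    simp [hφ]; ring
  simp_rw [h4] at h3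
  rw [integral_add ((bint hφm hφb').const_mul _) (integrable_const _), integral_const_mul] at h3
  have h5 : ∫ _s, 2 * M₂ * ∫ x, w x ∂mu01 ∂ν = t * (2 * M₂ * ∫ x, w x ∂mu01) := by
    simp [hν, measureReal_def, ht.1]
  rw [h5] at h3
  have h6 : t * (2 * M₂ * ∫ x, w x ∂mu01) ≤ T * (2 * M₂ * ∫ x, w x ∂mu01) :=
    mul_le_mul_of_nonneg_right hTt
      (mul_nonneg (by positivity) (integral_nonneg hw0))
  linarith

def bc (n : ℕ) (x : ℝ) : ℝ := ((⌈(n : ℝ) * x⌉ : ℤ) : ℝ) / n - 1 / (2 * n)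

lemma block_ae (n : ℕ) (x : ℝ) :
    blockIoc n x =ᵐ[volume] Metric.closedBall (bc n x) (1 / (2 * n)) := by
  rw [Real.closedBall_eq_Icc]
  have : Icc (bc n x - 1 / (2 * n)) (bc n x + 1 / (2 * n)) =
      Icc (((⌈(n : ℝ) * x⌉ : ℤ) : ℝ) / n - 1 / n) (((⌈(n : ℝ) * x⌉ : ℤ) : ℝ) / n) := by
    unfold bc
    congr 1 <;> ring
  rw [this]
  exact Ioc_ae_eq_Icc

lemma mem_bc {n : ℕ} (hn : 0 < n) (x : ℝ) : x ∈ Metric.closedBall (bc n x) (1 / (2 * n)) := by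
  have hn' : (0:ℝ) < n := by exact_mod_cast hn
  rw [Real.closedBall_eq_Icc]
  have h1 := Int.le_ceil ((n:ℝ) * x)
  have h2 := Int.ceil_lt_add_one ((n:ℝ) * x)
  unfold bc
  constructor
  · have : (((⌈(n : ℝ) * x⌉ : ℤ) : ℝ) - 1) / n ≤ x := by
      rw [div_le_iff₀ hn']; linarith
    calc _ = (((⌈(n : ℝ) * x⌉ : ℤ) : ℝ) - 1) / n := by ring
      _ ≤ x := this
  · have : x ≤ ((⌈(n : ℝ) * x⌉ : ℤ) : ℝ) / n := by
      rw [le_div_iff₀ hn']; linarith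
    linarith

lemma avgG_eq (n : ℕ) (f : ℝ → ℝ) (x : ℝ) :
    blockAvgG n f x = ⨍ y in Metric.closedBall (bc n x) (1 / (2 * n)), f y := by
  rw [setAverage_eq, blockAvgG, setIntegral_congr_set (block_ae n x), measureReal_def,
    Real.volume_closedBall, ENNReal.toReal_ofReal (by positivity), smul_eq_mul]
  congr 1
  rcases Nat.eq_zero_or_pos n with h | h
  · simp [h]
  · field_simp

lemma avgW_eq (n : ℕ) (W : ℝ → ℝ → ℝ) (x y : ℝ) :
    blockAvgW n W x y =
      ⨍ p in Metric.closedBall (bc n x, bc n y) (1 / (2 * n)), Function.uncurry W p := by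
  have hae : blockIoc n x ×ˢ blockIoc n y =ᵐ[volume]
      Metric.closedBall (bc n x, bc n y) (1 / (2 * (n:ℝ))) := by
    rw [← closedBall_prod_same]
    exact Measure.set_prod_ae_eq (block_ae n x) (block_ae n y)
  rw [setAverage_eq, blockAvgW, setIntegral_congr_set hae, measureReal_def, ← closedBall_prod_same,
    Measure.volume_eq_prod, Measure.prod_prod, ENNReal.toReal_mul,
    Real.volume_closedBall, Real.volume_closedBall, ENNReal.toReal_ofReal (by positivity),
    smul_eq_mul]
  congr 1
  rcases Nat.eq_zero_or_pos n with h | h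
  · simp [h]
  · field_simp

lemma avg_le {α : Type*} [MeasurableSpace α] {μ : Measure α} {f : α → ℝ} {C : ℝ}
    (h : ∀ x, |f x| ≤ C) (hC : 0 ≤ C) : |⨍ x, f x ∂μ| ≤ C := by
  rw [average]
  refine (norm_integral_le_of_norm_le_const (f := f) (C := C) (Eventually.of_forall h)).trans ?_
  have : ((μ univ)⁻¹ • μ).real univ ≤ 1 := by
    rw [measureReal_def]
    simp only [Measure.smul_apply, smul_eq_mul]
    exact ENNReal.toReal_le_of_le_ofReal zero_le_one (by
      simpa using ENNReal.inv_mul_le_one (μ univ))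
  nlinarith

lemma measG (n : ℕ) (f : ℝ → ℝ) : Measurable (blockAvgG n f) := by
  let F : ℤ → ℝ := fun k => (n:ℝ) * ∫ y in Ioc ((k:ℝ) / n - 1 / n) ((k:ℝ) / n), f y
  have : Measurable F := measurable_of_countable F
  exact this.comp (Int.measurable_ceil.comp (measurable_const.mul measurable_id))

lemma measW (n : ℕ) (W : ℝ → ℝ → ℝ) : Measurable (Function.uncurry (blockAvgW n W)) := by
  let F : ℤ × ℤ → ℝ := fun k => (n:ℝ) ^ 2 * ∫ p in Ioc ((k.1:ℝ) / n - 1 / n) ((k.1:ℝ) / n) ×ˢ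
    Ioc ((k.2:ℝ) / n - 1 / n) ((k.2:ℝ) / n), W p.1 p.2
  have hF : Measurable F := measurable_of_countable F
  have hc : Measurable (fun p : ℝ × ℝ => ((⌈(n:ℝ) * p.1⌉, ⌈(n:ℝ) * p.2⌉) : ℤ × ℤ)) :=
    (Int.measurable_ceil.comp (measurable_const.mul measurable_fst)).prodMk
      (Int.measurable_ceil.comp (measurable_const.mul measurable_snd))
  have e : Function.uncurry (blockAvgW n W) =
      F ∘ (fun p : ℝ × ℝ => ((⌈(n:ℝ) * p.1⌉, ⌈(n:ℝ) * p.2⌉) : ℤ × ℤ)) := by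
    funext p
    simp only [Function.uncurry, blockAvgW, blockIoc, Function.comp, F]
  rw [e]
  exact hF.comp hc

lemma delta_lim : Tendsto (fun n : ℕ => 1 / (2 * (n:ℝ))) atTop (nhdsWithin 0 (Ioi 0)) := by
  rw [tendsto_nhdsWithin_iff]
  constructor
  · have := (tendsto_one_div_atTop_nhds_zero_nat (𝕜 := ℝ)).const_mul (1/2)
    simp only [mul_zero] at this
    refine this.congr fun n => ?_
    ring
  · filter_upwards [eventually_gt_atTop 0] with n hn
    have : (0:ℝ) < n := by exact_mod_cast hn
    simp only [mem_Ioi]; positivity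

lemma bloc {α : Type*} [MeasurableSpace α] [TopologicalSpace α] {μ : Measure α}
    [IsLocallyFiniteMeasure μ] {f : α → ℝ}
    (hf : Measurable f) {C : ℝ} (h : ∀ x, |f x| ≤ C) : LocallyIntegrable f μ :=
  (locallyIntegrable_const C).mono hf.aestronglyMeasurable
      (Eventually.of_forall fun t => by
        exact (h t).trans (le_abs_self C))

lemma convG {f : ℝ → ℝ} (hf : Measurable f) {C : ℝ} (h : ∀ x, |f x| ≤ C) :
    Tendsto (fun n => ∫ x, |blockAvgG n f x - f x| ∂mu01) atTop (nhds 0) := by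
  have hC : 0 ≤ C := (abs_nonneg _).trans (h 0)
  have h1 : ∀ᵐ x ∂mu01, Tendsto (fun n => blockAvgG n f x) atTop (nhds (f x)) := by
    refine ae_mono (Measure.restrict_le_self) ?_
    filter_upwards [IsUnifLocDoublingMeasure.ae_tendsto_average (μ := volume) (bloc hf h) 1]
      with x hx
    simp_rw [avgG_eq]
    refine hx (fun n => bc n x) (fun n => 1 / (2 * (n:ℝ))) delta_lim ?_
    filter_upwards [eventually_gt_atTop 0] with n hn
    rw [one_mul]; exact mem_bc hn x
  have h2 := tendsto_integral_of_dominated_convergence (μ := mu01)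
    (F := fun n x => |blockAvgG n f x - f x|) (f := fun _ => 0) (fun _ => C + C)
    (fun n => ((measG n f).sub hf).abs.aestronglyMeasurable) (integrable_const _)
    (fun n => Eventually.of_forall fun x => by
      rw [Real.norm_eq_abs, abs_abs]
      refine (abs_sub _ _).trans (add_le_add ?_ (h x))
      rw [avgG_eq]; exact avg_le h hC)
    (by
      filter_upwards [h1] with x hx
      simpa using (hx.sub_const (f x)).abs)
  simpa using h2

lemma absW_le {W : ℝ → ℝ → ℝ} (h : ∀ x y, |W x y| ≤ 1) (n : ℕ) (x y : ℝ) :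
    |blockAvgW n W x y| ≤ 1 := by
  rw [avgW_eq]; exact avg_le (fun p => h p.1 p.2) zero_le_one

lemma convW {W : ℝ → ℝ → ℝ} (hf : Measurable (Function.uncurry W)) (h : ∀ x y, |W x y| ≤ 1) :
    Tendsto (fun n => ∫ x, ∫ y, |blockAvgW n W x y - W x y| ∂mu01 ∂mu01) atTop (nhds 0) := by
  have hb : ∀ n (p : ℝ × ℝ), ‖|blockAvgW n W p.1 p.2 - W p.1 p.2|‖ ≤ (1:ℝ) + 1 := fun n p => by
    rw [Real.norm_eq_abs, abs_abs]
    exact (abs_sub _ _).trans (add_le_add (absW_le h n _ _) (h _ _))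
  have hm : ∀ n, Measurable (fun p : ℝ × ℝ => |blockAvgW n W p.1 p.2 - W p.1 p.2|) := fun n =>
    ((measW n W).sub hf).abs
  have h1 : ∀ᵐ p ∂(mu01.prod mu01),
      Tendsto (fun n => blockAvgW n W p.1 p.2) atTop (nhds (W p.1 p.2)) := by
    rw [mu01, Measure.prod_restrict, ← Measure.volume_eq_prod]
    refine ae_mono (Measure.restrict_le_self) ?_
    filter_upwards [IsUnifLocDoublingMeasure.ae_tendsto_average (μ := (volume : Measure (ℝ × ℝ)))
      (bloc hf (fun p => h p.1 p.2)) 1] with x hx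
    simp_rw [avgW_eq]
    refine hx (fun n => (bc n x.1, bc n x.2)) (fun n => 1 / (2 * (n:ℝ))) delta_lim ?_
    filter_upwards [eventually_gt_atTop 0] with n hn
    rw [one_mul, ← closedBall_prod_same]
    exact ⟨mem_bc hn x.1, mem_bc hn x.2⟩
  have h2 := tendsto_integral_of_dominated_convergence (μ := mu01.prod mu01)
    (F := fun n p => |blockAvgW n W p.1 p.2 - W p.1 p.2|) (f := fun _ => 0) (fun _ => 1 + 1)
    (fun n => (hm n).aestronglyMeasurable) (integrable_const _)
    (fun n => Eventually.of_forall (hb n))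
    (by
      filter_upwards [h1] with x hx
      simpa using (hx.sub_const (W x.1 x.2)).abs)
  simp only [integral_zero] at h2
  refine h2.congr fun n => ?_
  exact integral_prod _ (bint (hm n) (hb n))

/-- Key theorem: if the continuum solution reaches consensus, then solutions on the
block approximations are eventually close to consensus off a set of small measure. -/
theorem consensus_approximation
    (W : ℝ → ℝ → ℝ) (g : ℝ → ℝ) (hW : IsKernel W) (hg : IsLinf g)
    (u : ℝ → ℝ → ℝ) (hu : IsSolution W g u)
    (un : ℕ → ℝ → ℝ → ℝ)
    (hun : ∀ n : ℕ, IsSolution (blockAvgW n W) (blockAvgG n g) (un n))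
    (hcons : ReachesConsensusOn u (Set.Icc (0:ℝ) 1)) :
    ∀ ε > (0:ℝ), ∀ c > (0:ℝ), ∀ D > (0:ℝ),
      ∃ T > (0:ℝ), ∃ N : ℕ, ∀ n > N, ∀ t ∈ Set.Icc T (T + D),
        ∃ S : Set (ℝ × ℝ), MeasurableSet S ∧
          S ⊆ (Set.Icc (0:ℝ) 1) ×ˢ (Set.Icc (0:ℝ) 1) ∧
          volume S < ENNReal.ofReal (c ^ 2) ∧
          ∀ x y : ℝ, (x, y) ∈ ((Set.Icc (0:ℝ) 1) ×ˢ (Set.Icc (0:ℝ) 1)) \ S →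
            |un n x t - un n y t| ≤ ε := by
  intro ε hε c hc D hD
  obtain ⟨hWm, -, hWb⟩ := hW
  have hWb' : ∀ x y, |W x y| ≤ 1 := fun x y => abs_le.2 (hWb x y)
  obtain ⟨T0, hT0⟩ := hcons (ε / 3) (by positivity)
  set T := max T0 1 with hT
  have hTpos : 0 < T := lt_of_lt_of_le one_pos (le_max_right _ _)
  have hTD : 0 < T + D := by positivity
  obtain ⟨M, hM0, u', hu'm, hu'b, hu'e, hu'eq⟩ := trunc hu hTD
  -- truncate g
  obtain ⟨hgm, Mg0, hMg0⟩ := hg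
  set Mg := max Mg0 0 with hMg
  have hMgn : 0 ≤ Mg := le_max_right _ _
  set g' : ℝ → ℝ := fun x => max (-Mg) (min Mg (g x)) with hg'
  have hg'm : Measurable g' := measurable_const.max (measurable_const.min hgm)
  have hg'b : ∀ x, |g' x| ≤ Mg := fun x => by
    rw [abs_le]
    exact ⟨le_max_left _ _, max_le (by linarith) (min_le_left _ _)⟩
  have hgg : ∀ᵐ x ∂mu01, g' x = g x := by
    filter_upwards [hMg0] with x hx
    have hx' := abs_le.1 (hx.trans (le_max_left Mg0 0))
    simp only [hg']
    rw [min_eq_right hx'.2, max_eq_right hx'.1]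
  have hGn : ∀ n : ℕ, 0 < n → ∀ᵐ x ∂mu01, blockAvgG n g x = blockAvgG n g' x := by
    intro n hn
    have hn' : (0:ℝ) < n := by exact_mod_cast hn
    have h0 : ∀ᵐ x ∂mu01, x ∈ Ioc (0:ℝ) 1 := by
      rw [mu01, ← restrict_Ioc_eq_restrict_Icc]
      exact ae_restrict_mem measurableSet_Ioc
    filter_upwards [h0] with x hx
    have hsub : blockIoc n x ⊆ Icc (0:ℝ) 1 := by
      have h1 : (1:ℝ) ≤ (⌈(n : ℝ) * x⌉ : ℤ) := by
        have : 0 < ⌈(n : ℝ) * x⌉ := Int.ceil_pos.2 (mul_pos hn' hx.1)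
        exact_mod_cast this
      have h2 : ((⌈(n : ℝ) * x⌉ : ℤ) : ℝ) ≤ n := by
        have : ⌈(n : ℝ) * x⌉ ≤ (n : ℤ) := Int.ceil_le.2 (by push_cast; nlinarith [hx.2])
        exact_mod_cast this
      intro y hy
      have h3 : 0 ≤ ((⌈(n : ℝ) * x⌉ : ℤ) : ℝ) / n - 1 / n := by
        rw [← sub_div]; exact div_nonneg (by linarith) hn'.le
      have h4 : ((⌈(n : ℝ) * x⌉ : ℤ) : ℝ) / n ≤ 1 := (div_le_one hn').2 h2
      exact ⟨h3.trans hy.1.le, hy.2.trans h4⟩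
    unfold blockAvgG
    congr 1
    apply integral_congr_ae
    have := ae_mono (Measure.restrict_mono hsub le_rfl) hgg
    filter_upwards [this] with y hy using hy.symm
  -- choose N
  have hlim : Tendsto (fun n => 3 / ε * (((∫ x, |blockAvgG n g' x - g' x| ∂mu01) + (T + D) *
      (2 * M * ∫ x, ∫ y, |blockAvgW n W x y - W x y| ∂mu01 ∂mu01)) * Real.exp (2 * (T + D))))
      atTop (nhds 0) := by
    have := (((convG hg'm hg'b).add (((convW hWm hWb').const_mul (2 * M)).const_mul
      (T + D))).mul_const (Real.exp (2 * (T + D)))).const_mul (3 / ε)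
    simpa using this
  obtain ⟨N, hN⟩ := eventually_atTop.1
    (hlim.eventually (gt_mem_nhds (by positivity : (0:ℝ) < c ^ 2)))
  refine ⟨T, hTpos, N, fun n hn t ht => ?_⟩
  have hn0 : 0 < n := lt_of_le_of_lt (Nat.zero_le _) hn
  obtain ⟨M₁, hM₁0, v, hvm, hvb, hve, hveq⟩ := trunc (hun n) hTD
  have htI : t ∈ Icc (0:ℝ) (T + D) := ⟨hTpos.le.trans ht.1, ht.2⟩
  have hgi : Integrable (fun x => |blockAvgG n g' x - g' x|) mu01 :=
    bint ((measG n g').sub hg'm).abs (C := Mg + Mg) fun x => by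
      rw [abs_abs]
      refine (abs_sub _ _).trans (add_le_add ?_ (hg'b x))
      rw [avgG_eq]; exact avg_le hg'b hMgn
  have hst := stab (measW n W) hWm (absW_le hWb' n) hWb' hgi hvm hu'm hvb hu'b
    (fun t ht => by
      filter_upwards [hveq t ht, hGn n hn0] with x h1 h2
      rw [h1, h2])
    (fun t ht => by
      filter_upwards [hu'eq t ht, hgg] with x h1 h2
      rw [h1, h2]) t htI
  set A := (∫ x, |blockAvgG n g' x - g' x| ∂mu01) + (T + D) *
      (2 * M * ∫ x, ∫ y, |blockAvgW n W x y - W x y| ∂mu01 ∂mu01) with hA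
  have hA0 : 0 ≤ A := by
    have : 0 ≤ ∫ x, ∫ y, |blockAvgW n W x y - W x y| ∂mu01 ∂mu01 :=
      integral_nonneg fun x => integral_nonneg fun y => abs_nonneg _
    have h2 : 0 ≤ ∫ x, |blockAvgG n g' x - g' x| ∂mu01 := integral_nonneg fun x => abs_nonneg _
    positivity
  have hNn : 3 / ε * (A * Real.exp (2 * (T + D))) < c ^ 2 := hN n hn.le
  have hφ : 3 / ε * ∫ x, |v x t - u' x t| ∂mu01 < c ^ 2 := by
    refine lt_of_le_of_lt (mul_le_mul_of_nonneg_left (hst.trans ?_) (by positivity)) hNn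
    refine mul_le_mul_of_nonneg_left (Real.exp_le_exp.2 ?_) hA0
    linarith [ht.2]
  have hut : Measurable (fun x => un n x t) :=
    (hun n).1.comp (by fun_prop : Measurable fun x : ℝ => (x, t))
  have hdm : Measurable (fun x => |v x t - u' x t|) :=
    ((hvm.comp (by fun_prop : Measurable fun x : ℝ => (x, t))).sub
      (hu'm.comp (by fun_prop : Measurable fun x : ℝ => (x, t)))).abs
  have hdb : ∀ x, |(|v x t - u' x t|)| ≤ M₁ + M := fun x => by
    rw [abs_abs]; exact (abs_sub _ _).trans (add_le_add (hvb x t) (hu'b x t))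
  have hSm : MeasurableSet {p : ℝ × ℝ | ε < |un n p.1 t - un n p.2 t|} :=
    measurableSet_lt measurable_const
      ((hut.comp measurable_fst).sub (hut.comp measurable_snd)).abs
  have hsq : MeasurableSet ((Icc (0:ℝ) 1) ×ˢ (Icc (0:ℝ) 1)) := measurableSet_Icc.prod measurableSet_Icc
  refine ⟨{p : ℝ × ℝ | ε < |un n p.1 t - un n p.2 t|} ∩ (Icc (0:ℝ) 1) ×ˢ (Icc (0:ℝ) 1),
    hSm.inter hsq, inter_subset_right, ?_, ?_⟩
  · rw [← Measure.restrict_apply hSm, Measure.volume_eq_prod, ← Measure.prod_restrict]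
    change (mu01.prod mu01) _ < _
    set f : ℝ × ℝ → ℝ := fun p => |v p.1 t - u' p.1 t| + |v p.2 t - u' p.2 t| with hf
    have hf1 : Integrable (fun p : ℝ × ℝ => |v p.1 t - u' p.1 t|) (mu01.prod mu01) :=
      bint (hdm.comp measurable_fst) fun p => hdb p.1
    have hf2 : Integrable (fun p : ℝ × ℝ => |v p.2 t - u' p.2 t|) (mu01.prod mu01) :=
      bint (hdm.comp measurable_snd) fun p => hdb p.2
    have hfint : ∫ p, f p ∂(mu01.prod mu01) = 2 * ∫ x, |v x t - u' x t| ∂mu01 := by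
      simp only [hf]
      rw [integral_add hf1 hf2, integral_fun_fst (fun x => |v x t - u' x t|),
        integral_fun_snd (fun x => |v x t - u' x t|)]
      simp; ring
    have hmk := mul_meas_ge_le_integral_of_nonneg (μ := mu01.prod mu01) (f := f)
      (Eventually.of_forall fun p => add_nonneg (abs_nonneg _) (abs_nonneg _)) (hf1.add hf2)
      (2 * ε / 3)
    rw [hfint] at hmk
    have hle : (mu01.prod mu01) {p : ℝ × ℝ | ε < |un n p.1 t - un n p.2 t|} ≤
        (mu01.prod mu01) {p | 2 * ε / 3 ≤ f p} := by
      apply measure_mono_ae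
      have q1 : ∀ᵐ x ∂mu01, v x t = un n x t ∧ u' x t = u x t := (hve t htI).and (hu'e t htI)
      have hc' : ∀ᵐ p ∂(mu01.prod mu01), |u p.1 t - u p.2 t| ≤ ε / 3 :=
        hT0 t ((le_max_left _ _).trans ht.1)
      filter_upwards [Measure.quasiMeasurePreserving_fst.ae q1,
        Measure.quasiMeasurePreserving_snd.ae q1, hc'] with p h1 h2 h3 h4
      change ε < |un n p.1 t - un n p.2 t| at h4
      change 2 * ε / 3 ≤ |v p.1 t - u' p.1 t| + |v p.2 t - u' p.2 t|
      rw [h1.1, h1.2, h2.1, h2.2]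
      have e : un n p.1 t - un n p.2 t = ((un n p.1 t - u p.1 t) - (un n p.2 t - u p.2 t)) +
        (u p.1 t - u p.2 t) := by ring
      rw [e] at h4
      have h5 := abs_add_le ((un n p.1 t - u p.1 t) - (un n p.2 t - u p.2 t)) (u p.1 t - u p.2 t)
      have h6 := abs_sub (un n p.1 t - u p.1 t) (un n p.2 t - u p.2 t)
      linarith
    refine hle.trans_lt ?_
    rw [← ENNReal.ofReal_toReal (measure_ne_top (mu01.prod mu01) _)]
    refine (ENNReal.ofReal_lt_ofReal_iff (by positivity)).2 ?_
    refine lt_of_le_of_lt ?_ hφ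
    rw [measureReal_def] at hmk
    rw [div_mul_eq_mul_div, le_div_iff₀ hε]
    linarith
  · rintro x y ⟨hxy, hnS⟩
    by_contra hlt
    exact hnS ⟨not_le.1 hlt, hxy⟩

end
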